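/- Let H be a simple graph with at least 3 vertices. If a 3-connected graph G has a subgraph G' such that G' is a subdivision of H and G' has fewer vertices than G, then G contains a triad addition of H as a minor, i.e., a graph obtained from H by adding a new vertex joined to three distinct vertices of H. -/

import Mathlib

open SimpleGraph

/-- `H` is a minor of `G` (branch-set / model definition). -/
def IsMinor {W V : Type*} (H : SimpleGraph W) (G : SimpleGraph V) : Prop :=
  ∃ B : W → Set V,
    (∀ w, (B w).Nonempty) ∧
    (∀ w, (G.induce (B w)).Connected) ∧
    (Pairwise fun w₁ w₂ => Disjoint (B w₁) (B w₂)) ∧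
    (∀ ⦃w₁ w₂ : W⦄, H.Adj w₁ w₂ → ∃ v₁ ∈ B w₁, ∃ v₂ ∈ B w₂, G.Adj v₁ v₂)

def K5 : SimpleGraph (Fin 5) := ⊤

def K33 : SimpleGraph (Fin 3 ⊕ Fin 3) := completeBipartiteGraph (Fin 3) (Fin 3)

/-- A graph is planar iff it has neither a `K₅` nor a `K₃,₃` minor (Wagner's theorem). -/
def Planar {V : Type*} (G : SimpleGraph V) : Prop := ¬ IsMinor K5 G ∧ ¬ IsMinor K33 G

/-- `G / uw`: contract the edge `uw`, merging `w` into `u` (the vertex `w` becomes isolated). -/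
def contractEdge {V : Type*} (G : SimpleGraph V) (u w : V) : SimpleGraph V :=
  SimpleGraph.fromRel fun a b =>
    a ≠ w ∧ b ≠ w ∧ (G.Adj a b ∨ (a = u ∧ G.Adj w b) ∨ (b = u ∧ G.Adj a w))

/-- A nonplanar graph is almost-planar if for every edge, deletion or contraction is planar. -/
def AlmostPlanar {V : Type*} (G : SimpleGraph V) : Prop :=
  ¬ Planar G ∧ ∀ ⦃u v : V⦄, G.Adj u v →
    (Planar (G.deleteEdges {s(u, v)}) ∨ Planar (contractEdge G u v))

/-- `G` is `k`-connected: more than `k` vertices and deleting fewer than `k` vertices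
leaves a connected graph. -/
def KConnected {V : Type*} (G : SimpleGraph V) (k : ℕ) : Prop :=
  k < Nat.card V ∧ ∀ s : Set V, s.ncard < k → (G.induce (sᶜ)).Connected

/-- `{G[A], G[B]}` is a `k`-separation of `G`. -/
def IsSep {V : Type*} (G : SimpleGraph V) (k : ℕ) (A B : Set V) : Prop :=
  A ∪ B = Set.univ ∧ A ≠ Set.univ ∧ B ≠ Set.univ ∧ (A ∩ B).ncard = k ∧
  ∀ ⦃x y : V⦄, G.Adj x y → (x ∈ A ∧ y ∈ A) ∨ (x ∈ B ∧ y ∈ B)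

/-- The star `K_{1,3}`, with centre `0`. -/
def K13 : SimpleGraph (Fin 4) := SimpleGraph.fromRel fun a _ => a = 0

def InternallyFourConnected {V : Type*} (G : SimpleGraph V) : Prop :=
  KConnected G 3 ∧ 5 ≤ Nat.card V ∧
  ∀ A B : Set V, IsSep G 3 A B →
    Xor' (Nonempty (G.induce A ≃g K13)) (Nonempty (G.induce B ≃g K13))

/-- The wheel `W_n`: a cycle of length `n` plus a hub (`none`) joined to all of it. -/
def wheelGraph (n : ℕ) : SimpleGraph (Option (Fin n)) :=
  SimpleGraph.fromRel fun a b =>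
    match a, b with
    | some i, some j => j.val = (i.val + 1) % n
    | none, some _ => True
    | _, _ => False

def IsWheel {V : Type*} (G : SimpleGraph V) : Prop :=
  ∃ n, 3 ≤ n ∧ Nonempty (G ≃g wheelGraph n)

/-- The double wheel `DW_n`: a cycle of length `n` plus two adjacent hubs joined to all of it. -/
def doubleWheel (n : ℕ) : SimpleGraph (Fin n ⊕ Fin 2) :=
  SimpleGraph.fromRel fun a b =>
    match a, b with
    | .inl i, .inl j => j.val = (i.val + 1) % n
    | .inl _, .inr _ => True
    | .inr _, .inr _ => True
    | _, _ => False

/-- The Möbius ladder `M_n`: a cycle of length `2n` plus all "opposite" chords. -/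
def mobiusLadder (n : ℕ) : SimpleGraph (Fin (2 * n)) :=
  SimpleGraph.fromRel fun i j =>
    j.val = (i.val + 1) % (2 * n) ∨ j.val = (i.val + n) % (2 * n)

/-- `C²_m`: a cycle of length `m` plus all chords between vertices at distance two. -/
def squareCycle (m : ℕ) : SimpleGraph (Fin m) :=
  SimpleGraph.fromRel fun i j =>
    j.val = (i.val + 1) % m ∨ j.val = (i.val + 2) % m

/-- The alternating double wheel `AW_{2n}`: a cycle of length `2n` plus two adjacent hubs,
each joined to alternating cycle vertices. -/
def altDoubleWheel (n : ℕ) : SimpleGraph (Fin (2 * n) ⊕ Fin 2) :=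
  SimpleGraph.fromRel fun a b =>
    match a, b with
    | .inl i, .inl j => j.val = (i.val + 1) % (2 * n)
    | .inl i, .inr k => i.val % 2 = k.val
    | .inr _, .inr _ => True
    | _, _ => False

/-- The class `𝒲`: three wheels glued along a common triangle `V₀`, with no other edges. -/
def InClassW {V : Type*} (G : SimpleGraph V) : Prop :=
  ∃ P : V → Fin 4,
    (P ⁻¹' {0}).ncard = 3 ∧
    (∀ x y : V, P x = 0 → P y = 0 → x ≠ y → G.Adj x y) ∧
    (∀ i : Fin 4, i ≠ 0 → IsWheel (G.induce {v | P v = 0 ∨ P v = i})) ∧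
    (∀ ⦃x y : V⦄, G.Adj x y → ∃ i : Fin 4, i ≠ 0 ∧ (P x = 0 ∨ P x = i) ∧ (P y = 0 ∨ P y = i))

/-- `EX₁`: `K₃,₃` plus a vertex joined to all of one colour class. -/
def EX1 : SimpleGraph (Option (Fin 3 ⊕ Fin 3)) :=
  SimpleGraph.fromRel fun a b =>
    match a, b with
    | some (.inl _), some (.inr _) => True
    | none, some (.inl _) => True
    | _, _ => False

/-- `EX₂`: `K₅` plus a vertex joined to three of its vertices. -/
def EX2 : SimpleGraph (Option (Fin 5)) :=
  SimpleGraph.fromRel fun a b =>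
    match a, b with
    | some i, some j => i ≠ j
    | none, some j => j.val < 3
    | _, _ => False

/-- `EX₈`: `K₃,₃` plus a vertex joined to two vertices of one class and one of the other. -/
def EX8 : SimpleGraph (Option (Fin 3 ⊕ Fin 3)) :=
  SimpleGraph.fromRel fun a b =>
    match a, b with
    | some (.inl _), some (.inr _) => True
    | none, some x => x = Sum.inl 0 ∨ x = Sum.inl 1 ∨ x = Sum.inr 0
    | _, _ => False

/-- `K₅ʰ`: subdivide the edges `01` and `02` of `K₅` and join the two subdivision vertices. -/
def K5h : SimpleGraph (Fin 5 ⊕ Fin 2) :=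
  SimpleGraph.fromRel fun a b =>
    match a, b with
    | .inl i, .inl j =>
        i ≠ j ∧ ¬(i = 0 ∧ j = 1) ∧ ¬(i = 1 ∧ j = 0) ∧ ¬(i = 0 ∧ j = 2) ∧ ¬(i = 2 ∧ j = 0)
    | .inl i, .inr k => (k = 0 ∧ (i = 0 ∨ i = 1)) ∨ (k = 1 ∧ (i = 0 ∨ i = 2))
    | .inr _, .inr _ => True
    | _, _ => False

/-- `K₃,₃ʰ`: subdivide two edges of `K₃,₃` at a common endpoint and join
the two subdivision vertices. -/
def K33h : SimpleGraph ((Fin 3 ⊕ Fin 3) ⊕ Fin 2) :=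
  SimpleGraph.fromRel fun a b =>
    match a, b with
    | .inl (.inl i), .inl (.inr j) => ¬(i = 0 ∧ (j = 0 ∨ j = 1))
    | .inl (.inr j), .inl (.inl i) => ¬(i = 0 ∧ (j = 0 ∨ j = 1))
    | .inl x, .inr k =>
        (k = 0 ∧ (x = Sum.inl 0 ∨ x = Sum.inr 0)) ∨ (k = 1 ∧ (x = Sum.inl 0 ∨ x = Sum.inr 1))
    | .inr _, .inr _ => True
    | _, _ => False

/-- `K₅⁺`: `K₅` plus a pendant vertex. -/
def K5plus : SimpleGraph (Option (Fin 5)) :=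
  SimpleGraph.fromRel fun a b =>
    match a, b with
    | some i, some j => i ≠ j
    | none, some j => j = 0
    | _, _ => False

/-- `K₃,₃⁺`: `K₃,₃` plus a pendant vertex. -/
def K33plus : SimpleGraph (Option (Fin 3 ⊕ Fin 3)) :=
  SimpleGraph.fromRel fun a b =>
    match a, b with
    | some (.inl _), some (.inr _) => True
    | none, some x => x = Sum.inl 0
    | _, _ => False

/-- `K₅ ⊕ e`: disjoint union of `K₅` and one edge. -/
def K5oplus : SimpleGraph (Fin 5 ⊕ Fin 2) :=
  SimpleGraph.fromRel fun a b =>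
    match a, b with
    | .inl i, .inl j => i ≠ j
    | .inr _, .inr _ => True
    | _, _ => False

/-- `K₃,₃ ⊕ e`: disjoint union of `K₃,₃` and one edge. -/
def K33oplus : SimpleGraph ((Fin 3 ⊕ Fin 3) ⊕ Fin 2) :=
  SimpleGraph.fromRel fun a b =>
    match a, b with
    | .inl (.inl _), .inl (.inr _) => True
    | .inr _, .inr _ => True
    | _, _ => False

/-- The triad addition of `H` at `x y z`: add a new vertex joined to `x`, `y`, `z`. -/
def triadAddition {U : Type*} (H : SimpleGraph U) (x y z : U) : SimpleGraph (Option U) :=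
  SimpleGraph.fromRel fun a b =>
    match a, b with
    | some u, some v => H.Adj u v
    | none, some u => u = x ∨ u = y ∨ u = z
    | _, _ => False

def IsTriadAdditionOf {V U : Type*} (G : SimpleGraph V) (H : SimpleGraph U) : Prop :=
  ∃ x y z : U, x ≠ y ∧ y ≠ z ∧ x ≠ z ∧ Nonempty (G ≃g triadAddition H x y z)

/-- `G` is obtained from `H` by subdividing (possibly repeatedly) edges of `H`,
all of which lie in `S`. -/
def IsSubdivisionWithin {V W : Type*} (G : SimpleGraph V) (H : SimpleGraph W)
    (S : Set (Sym2 W)) : Prop :=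
  ∃ (f : W ↪ V) (p : ∀ ⦃u v : W⦄, H.Adj u v → G.Walk (f u) (f v)),
    (∀ ⦃u v : W⦄ (h : H.Adj u v), (p h).IsPath) ∧
    (∀ ⦃u v : W⦄ (h : H.Adj u v), p h.symm = (p h).reverse) ∧
    (∀ ⦃u v : W⦄ (h : H.Adj u v), s(u, v) ∉ S → (p h).length = 1) ∧
    (∀ ⦃u v : W⦄ (h : H.Adj u v) (w : W), f w ∈ (p h).support → w = u ∨ w = v) ∧
    (∀ ⦃u v u' v' : W⦄ (h : H.Adj u v) (h' : H.Adj u' v'), s(u, v) ≠ s(u', v') →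
      ∀ x : V, x ∈ (p h).support → x ∈ (p h').support → x ∈ Set.range f) ∧
    (∀ x : V, x ∈ Set.range f ∨ ∃ (u v : W) (h : H.Adj u v), x ∈ (p h).support) ∧
    (∀ e ∈ G.edgeSet, ∃ (u v : W) (h : H.Adj u v), e ∈ (p h).edges)

/-- `G` is a subdivision of `H`. -/
def IsSubdivision {V W : Type*} (G : SimpleGraph V) (H : SimpleGraph W) : Prop :=
  IsSubdivisionWithin G H Set.univ

/-- `D(H)`: the set of edges of `H` whose deletion leaves a planar graph. -/
def Dset {U : Type*} (H : SimpleGraph U) : Set (Sym2 U) :=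
  {e | e ∈ H.edgeSet ∧ Planar (H.deleteEdges {e})}

/-- `G[A]` together with all edges between vertices of `T` (`T ⊆ A` intended). -/
def deltaGraph {V : Type*} (G : SimpleGraph V) (A T : Set V) : SimpleGraph A :=
  SimpleGraph.fromRel fun a b => G.Adj a.1 b.1 ∨ (a.1 ∈ T ∧ b.1 ∈ T)

/-- `G[A]^Y` for the separation `{G[A], G[B]}`: add a new vertex joined to `A ∩ B`. -/
def sepY {V : Type*} (G : SimpleGraph V) (A B : Set V) : SimpleGraph (Option A) :=
  SimpleGraph.fromRel fun x y =>
    match x, y with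
    | some a, some b => G.Adj a.1 b.1
    | none, some a => a.1 ∈ A ∩ B
    | _, _ => False

/-- `G₂` is obtained from `G` by adding isolated vertices. -/
def AddIsolated {V₂ V : Type*} (G₂ : SimpleGraph V₂) (G : SimpleGraph V) : Prop :=
  ∃ f : V ↪ V₂, (∀ a b : V, G₂.Adj (f a) (f b) ↔ G.Adj a b) ∧
    ∀ x : V₂, x ∉ Set.range f → ∀ y : V₂, ¬ G₂.Adj x y

/-- The set of non-isolated vertices of `G` (so `G* = G.induce (core G)`). -/
def core {V : Type*} (G : SimpleGraph V) : Set V := {v | ∃ w, G.Adj v w}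

/-- `G` is obtained from `G'` by 3-summing wheels onto distinct triangles of `G'`. -/
def SumWheelsOnto {V U : Type*} (G : SimpleGraph V) (G' : SimpleGraph U) : Prop :=
  ∃ (g : U ↪ V) (k : ℕ) (Wp : Fin k → Set V) (T : Fin k → Set U),
    (∀ i, (T i).ncard = 3) ∧
    (∀ i, ∀ x ∈ T i, ∀ y ∈ T i, x ≠ y → G'.Adj x y) ∧
    Function.Injective T ∧
    (∀ i, Disjoint (Wp i) (Set.range ⇑g)) ∧
    (Pairwise fun i j => Disjoint (Wp i) (Wp j)) ∧
    (Set.range ⇑g ∪ ⋃ i, Wp i) = Set.univ ∧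
    (∀ i, IsWheel (deltaGraph G (Wp i ∪ ⇑g '' T i) (⇑g '' T i))) ∧
    (∀ a b : U, G.Adj (g a) (g b) → G'.Adj a b) ∧
    (∀ a b : U, G'.Adj a b → (G.Adj (g a) (g b) ∨ ∃ i, a ∈ T i ∧ b ∈ T i)) ∧
    (∀ ⦃x y : V⦄, G.Adj x y → (x ∈ Set.range ⇑g ∧ y ∈ Set.range ⇑g) ∨
      ∃ i, x ∈ Wp i ∪ ⇑g '' T i ∧ y ∈ Wp i ∪ ⇑g '' T i) ∧
    (∀ i, ∀ x ∈ Wp i, ∀ ⦃y : V⦄, G.Adj x y → y ∈ Wp i ∪ ⇑g '' T i)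

/-- `H` has an edge whose deletion and contraction are both nonplanar. -/
def HasBadEdge {V : Type*} (H : SimpleGraph V) : Prop :=
  ∃ u v : V, H.Adj u v ∧ ¬ Planar (H.deleteEdges {s(u, v)}) ∧ ¬ Planar (contractEdge H u v)

/-!
Cut a subdivision of `H` in `G` into cells: a branch vertex for each vertex of `H`, the interior of
a path for each edge. Giving the cell of every edge to one of its ends yields a model of `H`. A
component `C` of the rest of `G` has, by 3-connectivity, three attachments, and it can serve as the
new vertex of a triad addition once the three cells containing them are given to distinct vertices.

If no cell of an attachment is confined to the ends of another one, choosing for each cell an end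
outside the cyclically next one achieves this. Otherwise two attachments lie on one path. If the
third one lies elsewhere, split the path between the two. If it lies on the path as well, then `C`
and a middle part of the path are two strands joining an initial and a final part of the path.
Shrink these two ends and enlarge the strands as far as possible: each end then has at most one
vertex with neighbours in the strands, so by 3-connectivity some strand is adjacent to another cell.
This strand takes the role of `C`, and the other strand is absorbed by an end.
-/

theorem injective_vec3 {α : Type*} {a b c : α} (hab : a ≠ b) (hac : a ≠ c) (hbc : b ≠ c) :
    Function.Injective ![a, b, c] := by
  simp [Function.Injective, Fin.forall_fin_succ, hab, hac, hbc, hab.symm, hac.symm, hbc.symm]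

theorem exists_add_one_lt_of_injective {n : Fin 3 → ℕ} (hn : Function.Injective n) :
    ∃ i j, n i + 1 < n j := by
  have h01 : n 0 ≠ n 1 := hn.ne (by decide)
  have h02 : n 0 ≠ n 2 := hn.ne (by decide)
  have h12 : n 1 ≠ n 2 := hn.ne (by decide)
  by_contra! h
  grind only [h 0 1, h 1 0, h 0 2, h 2 0, h 1 2, h 2 1]

section Connectivity

variable {V : Type*} {G : SimpleGraph V} {S T S' T' : Set V}

/-- Some edge of `G` joins a vertex of `S` to a vertex of `T`. -/
def Touches (G : SimpleGraph V) (S T : Set V) : Prop :=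
  ∃ x ∈ S, ∃ y ∈ T, G.Adj x y

theorem Touches.symm (h : Touches G S T) : Touches G T S :=
  let ⟨x, hx, y, hy, hxy⟩ := h
  ⟨y, hy, x, hx, hxy.symm⟩

theorem Touches.mono (h : Touches G S T) (hS : S ⊆ S') (hT : T ⊆ T') : Touches G S' T' :=
  let ⟨x, hx, y, hy, hxy⟩ := h
  ⟨x, hS hx, y, hT hy, hxy⟩

theorem Touches.of_singleton {x : V} (h : Touches G S {x}) (hx : x ∈ T) : Touches G S T :=
  h.mono subset_rfl (Set.singleton_subset_iff.2 hx)

theorem Touches.connected_union (h : Touches G S T) (hS : (G.induce S).Connected)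
    (hT : (G.induce T).Connected) : (G.induce (S ∪ T)).Connected :=
  let ⟨_, hx, _, hy, hxy⟩ := h
  connected_induce_union hS.preconnected hT.preconnected hx hy hxy

theorem connected_induce_singleton (G : SimpleGraph V) (v : V) : (G.induce {v}).Connected := by
  simp

theorem connected_induce_insert {x y : V} (hS : (G.induce S).Connected) (hx : x ∈ S)
    (hxy : G.Adj x y) : (G.induce (insert y S)).Connected := by
  rw [Set.insert_eq, Set.union_comm]
  exact Touches.connected_union ⟨x, hx, y, rfl, hxy⟩ hS (connected_induce_singleton G y)

theorem touches_diff_of_ssubset (hS : (G.induce S).Connected) (hT : T.Nonempty) (hTS : T ⊂ S) :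
    Touches G T (S \ T) := by
  obtain ⟨x, hx⟩ := hT
  obtain ⟨y, hyS, hyT⟩ := Set.exists_of_ssubset hTS
  obtain ⟨p⟩ := hS.preconnected ⟨x, hTS.subset hx⟩ ⟨y, hyS⟩
  obtain ⟨d, -, hd₁, hd₂⟩ := p.exists_boundary_dart (Subtype.val ⁻¹' T) hx hyT
  exact ⟨d.fst, hd₁, d.snd, ⟨d.snd.2, hd₂⟩, d.adj⟩

theorem exists_connected_diff_singleton [Finite V] {u : V} (hS : (G.induce S).Connected)
    (hu : u ∈ S) (hne : S ≠ {u}) : ∃ a ∈ S, a ≠ u ∧ (G.induce (S \ {a})).Connected := by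
  obtain ⟨T, -, hT⟩ := Finite.exists_le_maximal
    (p := fun T : Set V => u ∈ T ∧ T ⊂ S ∧ (G.induce T).Connected) (a := {u})
    ⟨rfl, (Set.singleton_subset_iff.2 hu).ssubset_of_ne hne.symm, connected_induce_singleton G u⟩
  obtain ⟨huT, hTS, hTc⟩ := hT.prop
  obtain ⟨x, hx, a, ⟨haS, haT⟩, hxa⟩ := touches_diff_of_ssubset hS ⟨u, huT⟩ hTS
  have h_insert : insert a T = S := by
    by_contra hne
    exact haT (hT.le_of_ge ⟨.inr huT,
      (Set.insert_subset haS hTS.subset).ssubset_of_ne hne, connected_induce_insert hTc hx hxa⟩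
      (Set.subset_insert a T) (Set.mem_insert a T))
  refine ⟨a, haS, fun h => haT (h ▸ huT), ?_⟩
  rwa [← h_insert, Set.insert_sdiff_self_of_notMem haT]

theorem exists_connected_disjoint [Finite V] {v : V} (hv : v ∉ S) :
    ∃ C, (G.induce C).Connected ∧ Disjoint C S ∧ ∀ a ∈ C, ∀ b, G.Adj a b → b ∈ C ∪ S := by
  obtain ⟨C, -, hC⟩ := Finite.exists_le_maximal
    (p := fun C : Set V => (G.induce C).Connected ∧ Disjoint C S) (a := {v})
    ⟨connected_induce_singleton G v, Set.disjoint_singleton_left.2 hv⟩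
  obtain ⟨hCc, hCS⟩ := hC.prop
  refine ⟨C, hCc, hCS, fun a ha b hab => ?_⟩
  by_cases hb : b ∈ S
  · exact .inr hb
  · exact .inl (hC.le_of_ge ⟨connected_induce_insert hCc ha hab,
      Set.disjoint_insert_left.2 ⟨hb, hCS⟩⟩ (Set.subset_insert b C) (Set.mem_insert b C))

theorem KConnected.finite {k : ℕ} (hG : KConnected G k) : Finite V :=
  Nat.finite_of_card_ne_zero (Nat.ne_zero_of_lt hG.1)

theorem KConnected.le_ncard_of_adj_subset {k : ℕ} (hG : KConnected G k) {C : Set V} {x y : V}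
    (hx : x ∈ C) (hCS : Disjoint C S) (hC : ∀ a ∈ C, ∀ b, G.Adj a b → b ∈ C ∪ S)
    (hy : y ∉ C ∪ S) : k ≤ S.ncard := by
  by_contra! hS
  obtain ⟨a, ha, b, ⟨hbS, hbC⟩, hab⟩ := touches_diff_of_ssubset (hG.2 S hS) ⟨x, hx⟩
    ⟨hCS.subset_compl_right, fun h => hy (.inl (h fun hyS => hy (.inr hyS)))⟩
  exact (hC a ha b hab).elim hbC hbS

end Connectivity

section Walks

variable {V : Type*} {G : SimpleGraph V} {s t : V} {p : G.Walk s t} {i j k l : ℕ}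

theorem mem_support_dropLast_iff {u v x : V} {p : G.Walk u v} (hp : p.IsPath) (hn : ¬p.Nil) :
    x ∈ p.dropLast.support ↔ x ∈ p.support ∧ x ≠ v := by
  have hd := hp.support_nodup
  rw [Walk.support_dropLast hn]
  rw [← p.dropLast_support_concat] at hd ⊢
  grind

/-- The vertices of the walk `p` at positions `i, …, j`. -/
def walkSegment (p : G.Walk s t) (i j : ℕ) : Set V :=
  p.getVert '' Set.Icc i j

theorem getVert_mem_walkSegment (hij : i ≤ k) (hj : k ≤ j) : p.getVert k ∈ walkSegment p i j :=
  Set.mem_image_of_mem _ ⟨hij, hj⟩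

theorem start_mem_walkSegment : s ∈ walkSegment p 0 j :=
  ⟨0, ⟨le_rfl, j.zero_le⟩, p.getVert_zero⟩

theorem end_mem_walkSegment (hi : i ≤ p.length) : t ∈ walkSegment p i p.length :=
  ⟨p.length, ⟨hi, le_rfl⟩, p.getVert_length⟩

theorem walkSegment_subset_support : walkSegment p i j ⊆ {x | x ∈ p.support} := by
  rintro _ ⟨k, -, rfl⟩
  exact p.getVert_mem_support k

theorem connected_walkSegment (hij : i ≤ j) (hj : j ≤ p.length) :
    (G.induce (walkSegment p i j)).Connected := by
  induction j, hij using Nat.le_induction with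
  | base =>
    rw [walkSegment, Set.Icc_self, Set.image_singleton]
    exact connected_induce_singleton G _
  | succ j hij ih =>
    rw [walkSegment, ← Set.insert_Icc_right_eq_Icc_add_one (by omega), Set.image_insert_eq]
    exact connected_induce_insert (ih (by omega)) (getVert_mem_walkSegment hij le_rfl)
      (p.adj_getVert_succ hj)

theorem touches_walkSegment (hij : i ≤ j) (hjk : j + 1 ≤ k) (hk : k ≤ p.length) :
    Touches G (walkSegment p i j) (walkSegment p (j + 1) k) :=
  ⟨_, getVert_mem_walkSegment hij le_rfl, _, getVert_mem_walkSegment le_rfl hjk,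
    p.adj_getVert_succ (by omega)⟩

theorem disjoint_walkSegment (hp : p.IsPath) (hjk : j < k) (hl : l ≤ p.length) :
    Disjoint (walkSegment p i j) (walkSegment p k l) := by
  refine Set.disjoint_left.2 ?_
  rintro _ ⟨a, ⟨-, ha⟩, rfl⟩ ⟨b, ⟨hb, hb'⟩, hab⟩
  have := hp.getVert_injOn (Set.mem_ofPred.2 (by omega)) (Set.mem_ofPred.2 (by omega)) hab
  omega

end Walks

section Models

variable {U V : Type*} {H : SimpleGraph U} {G : SimpleGraph V}

/-- Some triad addition of `H` is a minor of `G`. -/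
def HasTriadMinor (H : SimpleGraph U) (G : SimpleGraph V) : Prop :=
  ∃ x y z : U, x ≠ y ∧ y ≠ z ∧ x ≠ z ∧ IsMinor (triadAddition H x y z) G

theorem isMinor_triadAddition {B : U → Set V} {D : Set V} {x y z : U}
    (hB : ∀ u, (G.induce (B u)).Connected) (hdisj : Pairwise (Function.onFun Disjoint B))
    (hadj : ∀ ⦃u v⦄, H.Adj u v → Touches G (B u) (B v)) (hD : (G.induce D).Connected)
    (hDB : ∀ u, Disjoint D (B u)) (hx : Touches G D (B x)) (hy : Touches G D (B y))
    (hz : Touches G D (B z)) : IsMinor (triadAddition H x y z) G := by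
  let B' : Option U → Set V := fun o => o.elim D B
  have hB' : ∀ o, (G.induce (B' o)).Connected := Option.rec hD hB
  refine ⟨B', fun o => Set.nonempty_coe_sort.1 (hB' o).nonempty, hB', ?_, ?_⟩
  · rintro (_ | u) (_ | v) h
    · exact absurd rfl h
    · exact hDB v
    · exact (hDB u).symm
    · exact hdisj fun huv => h (congrArg some huv)
  · have hnew : ∀ u, u = x ∨ u = y ∨ u = z → Touches G D (B u) := by
      rintro u (rfl | rfl | rfl) <;> assumption
    rintro (_ | u) (_ | v) h <;> simp only [triadAddition, fromRel_adj] at h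
    · exact absurd rfl h.1
    · exact hnew v (h.2.resolve_right id)
    · exact (hnew u (h.2.resolve_left id)).symm
    · exact hadj (h.2.elim id fun h => h.symm)

/-- A model of `H` in `G` cut into cells: the diagonal cell `X s(u, u)` is the branch set of the
vertex `u`, and for an edge `uv` the cell `X s(u, v)` holds the interior of the connection between
the two branch sets, so that it can be merged into either of them. -/
structure IsCellModel (H : SimpleGraph U) (G : SimpleGraph V) (X : Sym2 U → Set V) : Prop where
  disjoint : Pairwise (Function.onFun Disjoint X)
  connected : ∀ u v, (G.induce (X s(u, u) ∪ X s(u, v))).Connected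
  touches : ∀ ⦃u v⦄, H.Adj u v → Touches G (X s(u, u) ∪ X s(u, v)) (X s(v, v))

/-- The vertices in the cells of `X` that are not confined to the ends of `d`. -/
def outerCells (X : Sym2 U → Set V) (d : Sym2 U) : Set V :=
  {x | ∃ e, (∃ w ∈ e, w ∉ d) ∧ x ∈ X e}

/-- The cells obtained from `X` by enlarging the branch sets of `u` and `v` to `A` and `B`, which
together absorb the cell of `uv`; the cells not confined to `u` and `v` are kept. -/
def splitCells (X : Sym2 U → Set V) (u v : U) (A B : Set V) (e : Sym2 U) : Set V :=
  {x | (e = s(u, u) ∧ x ∈ A) ∨ (e = s(v, v) ∧ x ∈ B) ∨ (∃ w ∈ e, w ∉ s(u, v)) ∧ x ∈ X e}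

section Cells

variable {X : Sym2 U → Set V} {o : Sym2 U → U} {u v : U} {A B D : Set V}

theorem splitCells_left (huv : u ≠ v) : splitCells X u v A B s(u, u) = A := by
  ext x
  simp [splitCells, huv]

theorem splitCells_right (huv : u ≠ v) : splitCells X u v A B s(v, v) = B := by
  ext x
  simp [splitCells, huv.symm]

theorem splitCells_mk (huv : u ≠ v) : splitCells X u v A B s(u, v) = ∅ := by
  ext x
  simp [splitCells, huv, huv.symm]

theorem splitCells_of_outer {e : Sym2 U} (he : ∃ w ∈ e, w ∉ s(u, v)) :
    splitCells X u v A B e = X e := by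
  obtain ⟨w, hwe, hw⟩ := he
  rw [Sym2.mem_iff, not_or] at hw
  ext x
  constructor
  · rintro (⟨rfl, -⟩ | ⟨rfl, -⟩ | ⟨-, hx⟩)
    · exact absurd (Sym2.mem_iff.1 hwe) (by simp [hw.1])
    · exact absurd (Sym2.mem_iff.1 hwe) (by simp [hw.2])
    · exact hx
  · exact fun hx => .inr (.inr ⟨⟨w, hwe, by simp [hw]⟩, hx⟩)

theorem disjoint_splitCells (hA : Disjoint D A) (hB : Disjoint D B)
    (hX : Disjoint D (outerCells X s(u, v))) (e : Sym2 U) :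
    Disjoint D (splitCells X u v A B e) := by
  refine Set.disjoint_right.2 ?_
  rintro x (⟨-, hx⟩ | ⟨-, hx⟩ | ⟨he, hx⟩)
  · exact Set.disjoint_right.1 hA hx
  · exact Set.disjoint_right.1 hB hx
  · exact Set.disjoint_right.1 hX ⟨e, he, hx⟩

/-- The branch set of `u` when every cell `X d` is merged into the branch set of `o d`. -/
def ownedCells (X : Sym2 U → Set V) (o : Sym2 U → U) (u : U) : Set V :=
  {x | ∃ d, o d = u ∧ x ∈ X d}

theorem owner_diag (ho : ∀ d, o d ∈ d) (u : U) : o s(u, u) = u := by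
  simpa using ho s(u, u)

theorem subset_ownedCells {d : Sym2 U} (h : o d = u) : X d ⊆ ownedCells X o u :=
  fun _ hx => ⟨d, h, hx⟩

theorem pairwise_disjoint_ownedCells (hX : Pairwise (Function.onFun Disjoint X)) :
    Pairwise (Function.onFun Disjoint (ownedCells X o)) := by
  intro u v huv
  refine Set.disjoint_left.2 ?_
  rintro x ⟨d, hd, hxd⟩ ⟨d', hd', hxd'⟩
  refine Set.disjoint_left.1 (hX ?_) hxd hxd'
  rintro rfl
  exact huv (hd.symm.trans hd')

/-- Sets `A` and `B` that can replace the branch sets of `u` and `v` and the cell of `uv` in the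
model with cells `X`. -/
structure IsEdgeSplit (G : SimpleGraph V) (X : Sym2 U → Set V) (u v : U) (A B : Set V) :
    Prop where
  ne : u ≠ v
  left_subset : X s(u, u) ⊆ A
  right_subset : X s(v, v) ⊆ B
  connected_left : (G.induce A).Connected
  connected_right : (G.induce B).Connected
  disjoint : Disjoint A B
  disjoint_outer : Disjoint (A ∪ B) (outerCells X s(u, v))
  touches : Touches G A B

theorem IsEdgeSplit.pairwise_disjoint_splitCells (h : IsEdgeSplit G X u v A B)
    (hX : Pairwise (Function.onFun Disjoint X)) :
    Pairwise (Function.onFun Disjoint (splitCells X u v A B)) := by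
  have hAX := (Set.disjoint_union_left.1 h.disjoint_outer).1
  have hBX := (Set.disjoint_union_left.1 h.disjoint_outer).2
  intro e e' hne
  refine Set.disjoint_left.2 ?_
  rintro x (⟨rfl, hx⟩ | ⟨rfl, hx⟩ | ⟨he, hx⟩) (⟨rfl, hx'⟩ | ⟨rfl, hx'⟩ | ⟨he', hx'⟩)
  · exact hne rfl
  · exact Set.disjoint_left.1 h.disjoint hx hx'
  · exact Set.disjoint_left.1 hAX hx ⟨e', he', hx'⟩
  · exact Set.disjoint_left.1 h.disjoint hx' hx
  · exact hne rfl
  · exact Set.disjoint_left.1 hBX hx ⟨e', he', hx'⟩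
  · exact Set.disjoint_left.1 hAX hx' ⟨e, he, hx⟩
  · exact Set.disjoint_left.1 hBX hx' ⟨e, he, hx⟩
  · exact Set.disjoint_left.1 (hX hne) hx hx'

namespace IsCellModel

theorem connected_diag (hX : IsCellModel H G X) (u : U) : (G.induce (X s(u, u))).Connected := by
  have h := hX.connected u u
  rwa [Set.union_self] at h

theorem connected_ownedCells (hX : IsCellModel H G X) (ho : ∀ d, o d ∈ d) (u : U) :
    (G.induce (ownedCells X o u)).Connected := by
  have h_diag := subset_ownedCells (X := X) (owner_diag ho u)
  obtain ⟨⟨r, hr⟩⟩ := (hX.connected_diag u).nonempty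
  refine induce_connected_of_patches r (h_diag hr) ?_
  rintro x ⟨d, hd, hx⟩
  obtain ⟨v, rfl⟩ : ∃ v, d = s(u, v) := Sym2.mem_iff_exists.1 (hd ▸ ho d)
  exact ⟨_, Set.union_subset h_diag (subset_ownedCells hd), .inl hr, .inr hx,
    (hX.connected u v).preconnected _ _⟩

theorem touches_ownedCells (hX : IsCellModel H G X) (ho : ∀ d, o d ∈ d) {u v : U}
    (huv : H.Adj u v) : Touches G (ownedCells X o u) (ownedCells X o v) := by
  have h_diag (w : U) := subset_ownedCells (X := X) (owner_diag ho w)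
  obtain h | h := Sym2.mem_iff.1 (ho s(u, v))
  · exact (hX.touches huv).mono (Set.union_subset (h_diag u) (subset_ownedCells h)) (h_diag v)
  · rw [Sym2.eq_swap] at h
    exact ((hX.touches huv.symm).mono (Set.union_subset (h_diag v) (subset_ownedCells h))
      (h_diag u)).symm

theorem hasTriadMinor_of_injective (hX : IsCellModel H G X) (hD : (G.induce D).Connected)
    (hDX : ∀ e, Disjoint D (X e)) {e : Fin 3 → Sym2 U} {w : Fin 3 → U}
    (he : Function.Injective e) (hw : Function.Injective w) (hwe : ∀ i, w i ∈ e i)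
    (hDe : ∀ i, Touches G D (X (e i))) : HasTriadMinor H G := by
  let o : Sym2 U → U := Function.extend e w fun d => d.out.1
  have ho_e (i : Fin 3) : o (e i) = w i := he.extend_apply w _ i
  have ho (d : Sym2 U) : o d ∈ d := by
    by_cases hd : ∃ i, e i = d
    · obtain ⟨i, rfl⟩ := hd
      exact ho_e i ▸ hwe i
    · simpa only [o, Function.extend_apply' _ _ _ hd] using d.out_fst_mem
  have hD_touches (i : Fin 3) : Touches G D (ownedCells X o (w i)) :=
    (hDe i).mono subset_rfl (subset_ownedCells (ho_e i))
  exact ⟨w 0, w 1, w 2, hw.ne (by decide), hw.ne (by decide), hw.ne (by decide),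
    isMinor_triadAddition (hX.connected_ownedCells ho) (pairwise_disjoint_ownedCells hX.disjoint)
      (fun _ _ => hX.touches_ownedCells ho) hD
      (fun u => Set.disjoint_right.2 fun x ⟨d, _, hx⟩ => Set.disjoint_right.1 (hDX d) hx)
      (hD_touches 0) (hD_touches 1) (hD_touches 2)⟩

end IsCellModel

namespace IsEdgeSplit

theorem subset_splitCells (h : IsEdgeSplit G X u v A B) (w : U) :
    X s(w, w) ⊆ splitCells X u v A B s(w, w) := by
  by_cases hw : w ∈ s(u, v)
  · obtain rfl | rfl := Sym2.mem_iff.1 hw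
    · exact (splitCells_left h.ne).symm ▸ h.left_subset
    · exact (splitCells_right h.ne).symm ▸ h.right_subset
  · rw [splitCells_of_outer ⟨w, Sym2.mem_mk_left w w, hw⟩]

theorem connected_splitCells (h : IsEdgeSplit G X u v A B) (hX : IsCellModel H G X) (w : U) :
    (G.induce (splitCells X u v A B s(w, w))).Connected := by
  by_cases hw : w ∈ s(u, v)
  · obtain rfl | rfl := Sym2.mem_iff.1 hw
    · exact (splitCells_left h.ne).symm ▸ h.connected_left
    · exact (splitCells_right h.ne).symm ▸ h.connected_right
  · rw [splitCells_of_outer ⟨w, Sym2.mem_mk_left w w, hw⟩]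
    exact hX.connected_diag w

theorem isCellModel_splitCells (h : IsEdgeSplit G X u v A B) (hX : IsCellModel H G X) :
    IsCellModel H G (splitCells X u v A B) := by
  have h_inner {a b : U} (hab : a ≠ b) (h_out : ¬∃ w ∈ s(a, b), w ∉ s(u, v)) :
      s(a, b) = s(u, v) := by
    push Not at h_out
    exact ((Sym2.mem_and_mem_iff hab).1
      ⟨h_out a (Sym2.mem_mk_left a b), h_out b (Sym2.mem_mk_right a b)⟩).symm
  refine ⟨h.pairwise_disjoint_splitCells hX.disjoint, fun a b => ?_, fun a b hab => ?_⟩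
  · by_cases h_out : ∃ w ∈ s(a, b), w ∉ s(u, v)
    · rw [splitCells_of_outer h_out, ← Set.union_eq_self_of_subset_right (h.subset_splitCells a),
        Set.union_assoc]
      obtain ⟨⟨r, hr⟩⟩ := (hX.connected_diag a).nonempty
      exact induce_union_connected (h.connected_splitCells hX a).preconnected
        (hX.connected a b).preconnected ⟨r, h.subset_splitCells a hr, .inl hr⟩
    · obtain rfl | hab := eq_or_ne a b
      · rw [Set.union_self]
        exact h.connected_splitCells hX a
      · rw [h_inner hab h_out, splitCells_mk h.ne, Set.union_empty]
        exact h.connected_splitCells hX a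
  · by_cases h_out : ∃ w ∈ s(a, b), w ∉ s(u, v)
    · rw [splitCells_of_outer h_out]
      exact (hX.touches hab).mono (Set.union_subset_union_left _ (h.subset_splitCells a))
        (h.subset_splitCells b)
    · obtain ⟨rfl, rfl⟩ | ⟨rfl, rfl⟩ := Sym2.eq_iff.1 (h_inner hab.ne h_out)
      · rw [splitCells_left h.ne, splitCells_right h.ne]
        exact h.touches.mono Set.subset_union_left subset_rfl
      · rw [splitCells_left h.ne, splitCells_right h.ne]
        exact h.touches.symm.mono Set.subset_union_left subset_rfl

end IsEdgeSplit

theorem IsCellModel.hasTriadMinor_of_isEdgeSplit (hX : IsCellModel H G X)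
    (h : IsEdgeSplit G X u v A B) (hD : (G.induce D).Connected) (hDA : Disjoint D A)
    (hDB : Disjoint D B) (hDX : Disjoint D (outerCells X s(u, v)))
    (h_left : Touches G D A) (h_right : Touches G D B)
    (h_outer : Touches G D (outerCells X s(u, v))) : HasTriadMinor H G := by
  obtain ⟨x, hx, y, ⟨e, ⟨w, hwe, hw⟩, hy⟩, hxy⟩ := h_outer
  have ⟨hwu, hwv⟩ : w ≠ u ∧ w ≠ v := by simpa using hw
  refine (h.isCellModel_splitCells hX).hasTriadMinor_of_injective hD
    (disjoint_splitCells hDA hDB hDX) (e := ![s(u, u), s(v, v), e]) (w := ![u, v, w])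
    (injective_vec3 ?_ ?_ ?_) (injective_vec3 h.ne hwu.symm hwv.symm) ?_ ?_
  · simpa using h.ne
  · rintro rfl
    exact hwu (by simpa using hwe)
  · rintro rfl
    exact hwv (by simpa using hwe)
  · simpa [Fin.forall_fin_succ] using hwe
  · suffices Touches G D (splitCells X u v A B e) by
      simpa [Fin.forall_fin_succ, splitCells_left h.ne, splitCells_right h.ne, h_left, h_right]
        using this
    rw [splitCells_of_outer ⟨w, hwe, hw⟩]
    exact ⟨x, hx, y, hy, hxy⟩

end Cells

end Models

section Theta

open Function

variable {V : Type*} {G : SimpleGraph V} {M : Set V} {r : Bool → V} {E S E' S' : Bool → Set V}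

/-- Four pairwise disjoint connected sets avoiding `M`: two ends `E i ∋ r i` and two strands `S j`.
They form a theta once each strand is attached to both ends. -/
structure IsThetaFrame (G : SimpleGraph V) (M : Set V) (r : Bool → V) (E S : Bool → Set V) :
    Prop where
  root_mem : ∀ i, r i ∈ E i
  connected_end : ∀ i, (G.induce (E i)).Connected
  connected_strand : ∀ j, (G.induce (S j)).Connected
  disjoint_ends : Pairwise (Disjoint on E)
  disjoint_strands : Pairwise (Disjoint on S)
  disjoint_end_strand : ∀ i j, Disjoint (E i) (S j)
  disjoint_end : ∀ i, Disjoint (E i) M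
  disjoint_strand : ∀ j, Disjoint (S j) M

/-- A contracted theta graph avoiding `M`: two rooted ends and two strands, each strand being
attached to both ends. -/
structure IsTheta (G : SimpleGraph V) (M : Set V) (r : Bool → V) (E S : Bool → Set V) : Prop
    extends IsThetaFrame G M r E S where
  touches : ∀ i j, Touches G (E i) (S j)

/-- A theta from which no vertex can be moved out of an end or into a strand. -/
structure IsExtremalTheta (G : SimpleGraph V) (M : Set V) (r : Bool → V) (E S : Bool → Set V) : Prop
    extends IsTheta G M r E S where
  eq_of_le : ∀ ⦃E' S'⦄, IsTheta G M r E' S' → E' ≤ E → S ≤ S' → E' = E ∧ S' = S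

theorem IsTheta.exists_isExtremalTheta [Finite V] (h : IsTheta G M r E S) :
    ∃ E' S', IsExtremalTheta G M r E' S' := by
  obtain ⟨⟨E', S'⟩, -, hmax⟩ := Finite.exists_le_maximal (α := (Bool → Set V)ᵒᵈ × (Bool → Set V))
    (p := fun q => IsTheta G M r (OrderDual.ofDual q.1) q.2) (a := (OrderDual.toDual E, S)) h
  refine ⟨OrderDual.ofDual E', S', hmax.prop, fun E'' S'' h' hE hS => ?_⟩
  exact Prod.mk.inj (hmax.eq_of_ge (y := (OrderDual.toDual E'', S'')) h' ⟨hE, hS⟩)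

theorem IsThetaFrame.remove (h : IsThetaFrame G M r E S) {a : V} {i : Bool} (ha : a ≠ r i)
    (hc : (G.induce (E i \ {a})).Connected) :
    IsThetaFrame G M r (update E i (E i \ {a})) S := by
  have hle : update E i (E i \ {a}) ≤ E := update_le_self_iff.2 Set.sdiff_subset
  exact
  { root_mem := (forall_update_iff E fun k s => r k ∈ s).2
      ⟨⟨h.root_mem i, ha.symm⟩, fun k _ => h.root_mem k⟩
    connected_end := (forall_update_iff E fun _ s => (G.induce s).Connected).2
      ⟨hc, fun k _ => h.connected_end k⟩
    connected_strand := h.connected_strand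
    disjoint_ends := fun k l hkl => (h.disjoint_ends hkl).mono (hle k) (hle l)
    disjoint_strands := h.disjoint_strands
    disjoint_end_strand := fun k l => (h.disjoint_end_strand k l).mono_left (hle k)
    disjoint_end := fun k => (h.disjoint_end k).mono_left (hle k)
    disjoint_strand := h.disjoint_strand }

theorem IsThetaFrame.absorb (h : IsThetaFrame G M r E S) {a b : V} {j : Bool} (hb : b ∈ S j)
    (hba : G.Adj b a) (haE : ∀ i, a ∉ E i) (haS : ∀ k ≠ j, a ∉ S k) (haM : a ∉ M) :
    IsThetaFrame G M r E (update S j (insert a (S j))) where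
  root_mem := h.root_mem
  connected_end := h.connected_end
  connected_strand := (forall_update_iff S fun _ s => (G.induce s).Connected).2
    ⟨connected_induce_insert (h.connected_strand j) hb hba, fun k _ => h.connected_strand k⟩
  disjoint_ends := h.disjoint_ends
  disjoint_strands := by
    have (k : Bool) (hk : k ≠ j) : Disjoint (insert a (S j)) (S k) :=
      Set.disjoint_insert_left.2 ⟨haS k hk, h.disjoint_strands hk.symm⟩
    intro k l hkl
    obtain rfl | hk := eq_or_ne k j
    · simpa [onFun, hkl.symm] using this l hkl.symm
    · obtain rfl | hl := eq_or_ne l j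
      · simpa [onFun, hk] using (this k hk).symm
      · simpa [onFun, hk, hl] using h.disjoint_strands hkl
  disjoint_end_strand i := (forall_update_iff S fun _ s => Disjoint (E i) s).2
    ⟨Set.disjoint_insert_right.2 ⟨haE i, h.disjoint_end_strand i j⟩,
      fun k _ => h.disjoint_end_strand i k⟩
  disjoint_end := h.disjoint_end
  disjoint_strand := (forall_update_iff S fun _ s => Disjoint s M).2
    ⟨Set.disjoint_insert_left.2 ⟨haM, h.disjoint_strand j⟩, fun k _ => h.disjoint_strand k⟩

namespace IsExtremalTheta

theorem mem_of_adj (h : IsExtremalTheta G M r E S) {a b : V} {j : Bool} (hb : b ∈ S j)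
    (hba : G.Adj b a) (haM : a ∉ M) : (∃ i, a ∈ E i) ∨ ∃ k, a ∈ S k := by
  by_contra! ⟨haE, haS⟩
  have hle : S ≤ update S j (insert a (S j)) := le_update_self_iff.2 (Set.subset_insert _ _)
  have h' : IsTheta G M r E (update S j (insert a (S j))) :=
    ⟨h.absorb hb hba haE (fun k _ => haS k) haM,
      fun i k => (h.touches i k).mono subset_rfl (hle k)⟩
  have := congrFun (h.eq_of_le h' le_rfl hle).2 j
  rw [update_self] at this
  exact haS j (this ▸ Set.mem_insert a (S j))

theorem not_isTheta_remove (h : IsExtremalTheta G M r E S) {a : V} {i : Bool} (ha : a ∈ E i)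
    (hS : S ≤ S') : ¬IsTheta G M r (update E i (E i \ {a})) S' := fun h' => by
  have := congrFun (h.eq_of_le h' (update_le_self_iff.2 Set.sdiff_subset) hS).1 i
  rw [update_self] at this
  have haa : a ∈ E i \ {a} := by rwa [this]
  exact haa.2 rfl

theorem exists_not_touches_diff (h : IsExtremalTheta G M r E S) {a : V} {i : Bool} (ha : a ∈ E i)
    (har : a ≠ r i) (hc : (G.induce (E i \ {a})).Connected) :
    ∃ j, ¬Touches G (E i \ {a}) (S j) := by
  by_contra! ht
  refine h.not_isTheta_remove ha le_rfl ⟨h.remove har hc, fun k j => ?_⟩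
  obtain rfl | hk := eq_or_ne k i
  · simpa using ht j
  · simpa [hk] using h.touches k j

theorem not_touches_diff (h : IsExtremalTheta G M r E S) {a : V} {i : Bool} (ha : a ∈ E i)
    (har : a ≠ r i) (hc : (G.induce (E i \ {a})).Connected) (k : Bool) :
    ¬Touches G (E i \ {a}) (S k) := fun hk => by
  -- Removing `a` cuts off the strand `S j`, so moving `a` into that strand gives a larger theta.
  obtain ⟨j, hj⟩ := h.exists_not_touches_diff ha har hc
  have hkj : k ≠ j := fun hkj => hj (hkj ▸ hk)
  obtain ⟨y, hy, hay⟩ : ∃ y ∈ S j, G.Adj a y := by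
    obtain ⟨x, hx, y, hy, hxy⟩ := h.touches i j
    obtain rfl | hxa := eq_or_ne x a
    · exact ⟨y, hy, hxy⟩
    · exact absurd ⟨x, ⟨hx, hxa⟩, y, hy, hxy⟩ hj
  have haE (l : Bool) : a ∉ update E i (E i \ {a}) l := by
    obtain rfl | hl := eq_or_ne l i
    · simp
    · simpa [hl] using Set.disjoint_left.1 (h.disjoint_ends hl.symm) ha
  have hle : S ≤ update S j (insert a (S j)) := le_update_self_iff.2 (Set.subset_insert _ _)
  refine h.not_isTheta_remove ha hle ⟨(h.remove har hc).absorb hy hay.symm haE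
    (fun l _ => Set.disjoint_left.1 (h.disjoint_end_strand i l) ha)
    (Set.disjoint_left.1 (h.disjoint_end i) ha), fun l m => ?_⟩
  obtain rfl | hl := eq_or_ne l i
  · rw [update_self]
    obtain rfl | hm := eq_or_ne m j
    · have haE' : {a} ⊂ E l := (Set.singleton_subset_iff.2 ha).ssubset_of_ne fun h' =>
        har (h' ▸ h.root_mem l : r l ∈ ({a} : Set V)).symm
      rw [update_self]
      exact (touches_diff_of_ssubset (h.connected_end l) (Set.singleton_nonempty a)
        haE').symm.mono subset_rfl
        (Set.singleton_subset_iff.2 (Set.mem_insert a _))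
    · rw [update_of_ne hm, Bool.eq_not.2 hm, ← Bool.eq_not.2 hkj]
      exact hk
  · rw [update_of_ne hl]
    exact (h.touches l m).mono subset_rfl (hle m)

theorem exists_forall_eq_of_touches [Finite V] (h : IsExtremalTheta G M r E S) (i : Bool) :
    ∃ a ∈ E i, ∀ x ∈ E i, ∀ j, Touches G {x} (S j) → x = a := by
  by_cases hEi : E i = {r i}
  · exact ⟨r i, h.root_mem i, fun x hx _ _ => by rwa [hEi] at hx⟩
  obtain ⟨a, ha, har, hc⟩ := exists_connected_diff_singleton (h.connected_end i) (h.root_mem i) hEi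
  refine ⟨a, ha, fun x hx j hj => ?_⟩
  by_contra hxa
  exact h.not_touches_diff ha har hc j
    (hj.mono (Set.singleton_subset_iff.2 ⟨hx, hxa⟩) subset_rfl)

theorem exists_touches_rest (hG : KConnected G 3) (h : IsExtremalTheta G M r E S)
    (hM : M.Nonempty) : ∃ j, Touches G (S j) M := by
  have := hG.finite
  by_contra! hSM
  -- The strands are now separated from `M` by the two vertices `a i`.
  choose a haE ha using h.exists_forall_eq_of_touches
  obtain ⟨m, hm⟩ := hM
  have hSa : Disjoint (⋃ j, S j) (Set.range a) := by
    refine Set.disjoint_right.2 ?_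
    rintro _ ⟨i, rfl⟩ hS
    obtain ⟨j, hj⟩ := Set.mem_iUnion.1 hS
    exact Set.disjoint_left.1 (h.disjoint_end_strand i j) (haE i) hj
  have hclosed : ∀ b ∈ ⋃ j, S j, ∀ x, G.Adj b x → x ∈ (⋃ j, S j) ∪ Set.range a := by
    intro b hb x hbx
    obtain ⟨j, hb⟩ := Set.mem_iUnion.1 hb
    obtain ⟨i, hx⟩ | ⟨k, hx⟩ := h.mem_of_adj hb hbx fun hx => hSM j ⟨b, hb, x, hx, hbx⟩
    · exact .inr ⟨i, (ha i x hx j ⟨x, rfl, b, hb, hbx.symm⟩).symm⟩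
    · exact .inl (Set.mem_iUnion.2 ⟨k, hx⟩)
  have hmS : m ∉ (⋃ j, S j) ∪ Set.range a := by
    rintro (hmS | ⟨i, rfl⟩)
    · obtain ⟨j, hj⟩ := Set.mem_iUnion.1 hmS
      exact Set.disjoint_left.1 (h.disjoint_strand j) hj hm
    · exact Set.disjoint_left.1 (h.disjoint_end i) (haE i) hm
  obtain ⟨⟨s, hs⟩⟩ := (h.connected_strand true).nonempty
  have h3 := hG.le_ncard_of_adj_subset (Set.mem_iUnion_of_mem true hs) hSa hclosed hmS
  have h2 : (Set.range a).ncard ≤ 2 := by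
    rw [← Set.image_univ]
    exact (Set.ncard_image_le).trans (by simp)
  omega

end IsExtremalTheta

end Theta

section TopologicalModels

variable {U V : Type*} {H : SimpleGraph U} {G : SimpleGraph V}

/-- A subdivision of `H` inside `G`: distinct branch vertices for the vertices of `H` and internally
disjoint paths of `G`, avoiding the other branch vertices, for its edges. -/
structure TopologicalModel (H : SimpleGraph U) (G : SimpleGraph V) where
  branch : U ↪ V
  path : ∀ ⦃u v : U⦄, H.Adj u v → G.Walk (branch u) (branch v)
  isPath : ∀ ⦃u v : U⦄ (h : H.Adj u v), (path h).IsPath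
  path_symm : ∀ ⦃u v : U⦄ (h : H.Adj u v), path h.symm = (path h).reverse
  eq_or_eq_of_branch_mem : ∀ ⦃u v : U⦄ (h : H.Adj u v) (w : U),
    branch w ∈ (path h).support → w = u ∨ w = v
  mem_range_of_mem_of_mem : ∀ ⦃u v u' v' : U⦄ (h : H.Adj u v) (h' : H.Adj u' v'),
    s(u, v) ≠ s(u', v') → ∀ x, x ∈ (path h).support → x ∈ (path h').support → x ∈ Set.range branch

namespace TopologicalModel

variable (T : TopologicalModel H G)

/-- The cell of `s(u, u)` is the branch vertex of `u`, and the cell of an edge is the interior of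
its path. -/
def cell (e : Sym2 U) : Set V :=
  {x | (∃ u, e = s(u, u) ∧ T.branch u = x) ∨
    x ∉ Set.range T.branch ∧ ∃ u v, ∃ h : H.Adj u v, e = s(u, v) ∧ x ∈ (T.path h).support}

theorem cell_diag (u : U) : T.cell s(u, u) = {T.branch u} := by
  ext x
  constructor
  · rintro (⟨v, h, rfl⟩ | ⟨-, v, w, h, he, -⟩)
    · obtain rfl : u = v := by simpa using h
      rfl
    · exact absurd h ((by grind : v = w) ▸ H.irrefl)
  · rintro rfl
    exact .inl ⟨u, rfl, rfl⟩

variable {u v : U}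

theorem cell_of_adj (h : H.Adj u v) :
    T.cell s(u, v) = {x | x ∉ Set.range T.branch ∧ x ∈ (T.path h).support} := by
  ext x
  constructor
  · rintro (⟨w, he, rfl⟩ | ⟨hx, u', v', h', he, hx'⟩)
    · exact absurd h ((by grind : u = v) ▸ H.irrefl)
    · refine ⟨hx, ?_⟩
      obtain ⟨rfl, rfl⟩ | ⟨rfl, rfl⟩ := Sym2.eq_iff.1 he
      · exact hx'
      · simpa [T.path_symm h] using hx'
  · exact fun hx => .inr ⟨hx.1, u, v, h, rfl, hx.2⟩

theorem cell_of_not_adj (hne : u ≠ v) (h : ¬H.Adj u v) : T.cell s(u, v) = ∅ := by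
  refine Set.eq_empty_of_forall_notMem ?_
  rintro x (⟨w, he, -⟩ | ⟨-, u', v', h', he, -⟩)
  · exact hne (by grind)
  · exact h ((H.mem_edgeSet (v := u)).1 (he ▸ h'))

theorem cell_union_cell (h : H.Adj u v) :
    T.cell s(u, u) ∪ T.cell s(u, v) = {x | x ∈ (T.path h).dropLast.support} := by
  have hne : ¬(T.path h).Nil := Walk.not_nil_of_ne (T.branch.injective.ne h.ne)
  ext x
  rw [T.cell_diag, T.cell_of_adj h, Set.mem_ofPred_eq, mem_support_dropLast_iff (T.isPath h) hne]
  constructor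
  · rintro (rfl | ⟨hx, hxp⟩)
    · exact ⟨Walk.start_mem_support _, T.branch.injective.ne h.ne⟩
    · exact ⟨hxp, fun hxv => hx ⟨v, hxv.symm⟩⟩
  · rintro ⟨hxp, hxv⟩
    by_cases hx : x ∈ Set.range T.branch
    · obtain ⟨w, rfl⟩ := hx
      obtain rfl | rfl := T.eq_or_eq_of_branch_mem h w hxp
      · exact .inl rfl
      · exact absurd rfl hxv
    · exact .inr ⟨hx, hxp⟩

theorem pairwise_disjoint_cell : Pairwise (Function.onFun Disjoint T.cell) := by
  intro e e' hne
  refine Set.disjoint_left.2 ?_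
  rintro x (⟨u, rfl, rfl⟩ | ⟨hx, u, v, h, rfl, hxp⟩) (⟨u', rfl, hx'⟩ | ⟨hx', u', v', h', rfl, hxp'⟩)
  · exact hne (by rw [T.branch.injective hx'])
  · exact hx' ⟨u, rfl⟩
  · exact hx ⟨u', hx'⟩
  · exact hx (T.mem_range_of_mem_of_mem h h' hne x hxp hxp')

theorem isCellModel_cell : IsCellModel H G T.cell where
  disjoint := T.pairwise_disjoint_cell
  connected u v := by
    by_cases h : H.Adj u v
    · rw [T.cell_union_cell h]
      exact Walk.connected_induce_support _
    · have : T.cell s(u, u) ∪ T.cell s(u, v) = {T.branch u} := by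
        obtain rfl | hne := eq_or_ne u v
        · rw [Set.union_self, cell_diag]
        · rw [T.cell_of_not_adj hne h, Set.union_empty, cell_diag]
      rw [this]
      exact connected_induce_singleton G _
  touches u v h := by
    rw [T.cell_union_cell h, cell_diag]
    refine ⟨_, Walk.end_mem_support _, _, rfl, ?_⟩
    exact Walk.adj_penultimate (Walk.not_nil_of_ne fun h' => h.ne (T.branch.injective h'))

theorem mem_support_of_mem_cell (h : H.Adj u v) {e : Sym2 U} (he : ∀ w ∈ e, w ∈ s(u, v)) {x : V}
    (hx : x ∈ T.cell e) : x ∈ (T.path h).support := by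
  obtain ⟨w, rfl, rfl⟩ | ⟨hxr, u', v', h', rfl, hxp⟩ := hx
  · obtain rfl | rfl := Sym2.mem_iff.1 (he w (Sym2.mem_mk_left w w))
    · exact Walk.start_mem_support _
    · exact Walk.end_mem_support _
  · have he' : s(u', v') = s(u, v) := (Sym2.mem_and_mem_iff h'.ne).1
      ⟨he u' (Sym2.mem_mk_left u' v'), he v' (Sym2.mem_mk_right u' v')⟩ |>.symm
    have hx : x ∈ T.cell s(u', v') := .inr ⟨hxr, u', v', h', rfl, hxp⟩
    rw [he', T.cell_of_adj h] at hx
    exact hx.2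

theorem disjoint_support_outerCells (h : H.Adj u v) :
    Disjoint {x | x ∈ (T.path h).support} (outerCells T.cell s(u, v)) := by
  refine Set.disjoint_left.2 ?_
  rintro x hxp ⟨e, ⟨w, hwe, hw⟩, ⟨w', rfl, rfl⟩ | ⟨hx, u', v', h', rfl, hxp'⟩⟩
  · obtain rfl : w = w' := by simpa using hwe
    exact hw (Sym2.mem_iff.2 (T.eq_or_eq_of_branch_mem h w hxp))
  · refine hx (T.mem_range_of_mem_of_mem h h' ?_ x hxp hxp')
    exact fun he => hw (he ▸ hwe)

theorem exists_adj_of_mem_cell {e : Sym2 U} {x y : V} (hx : x ∈ T.cell e) {e' : Sym2 U}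
    (hy : y ∈ T.cell e') (he : ∀ w ∈ e', w ∈ e) (hxy : x ≠ y) : ∃ u v, H.Adj u v ∧ e = s(u, v) := by
  obtain ⟨u, rfl, rfl⟩ | ⟨-, u, v, h, rfl, -⟩ := hx
  · obtain ⟨w, rfl, rfl⟩ | ⟨-, u', v', h', rfl, -⟩ := hy
    · obtain rfl : w = u := by simpa using he w (Sym2.mem_mk_left w w)
      exact absurd rfl hxy
    · have hu' := he u' (Sym2.mem_mk_left u' v')
      have hv' := he v' (Sym2.mem_mk_right u' v')
      exact absurd h' (by grind [H.irrefl])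
  · exact ⟨u, v, h, rfl⟩

/-- The vertex set of the subdivision. -/
def verts : Set V :=
  ⋃ e, T.cell e

theorem outerCells_subset_verts {d : Sym2 U} : outerCells T.cell d ⊆ T.verts :=
  fun _ ⟨e, _, hx⟩ => Set.mem_iUnion.2 ⟨e, hx⟩

theorem support_subset_verts (h : H.Adj u v) : {x | x ∈ (T.path h).support} ⊆ T.verts := by
  intro x hx
  by_cases hxr : x ∈ Set.range T.branch
  · obtain ⟨w, rfl⟩ := hxr
    exact Set.mem_iUnion.2 ⟨s(w, w), .inl ⟨w, rfl, rfl⟩⟩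
  · exact Set.mem_iUnion.2 ⟨s(u, v), .inr ⟨hxr, u, v, h, rfl, hx⟩⟩

end TopologicalModel

theorem IsSubdivision.exists_topologicalModel {W : Type*} {K : SimpleGraph W}
    (h : IsSubdivision K H) (φ : K →g G) (hφ : Function.Injective φ) :
    ∃ T : TopologicalModel H G, T.verts ⊆ Set.range φ := by
  obtain ⟨f, p, hpath, hsymm, -, hbranch, hdisj, -, -⟩ := h
  have hmem {u v : U} (h : H.Adj u v) (x : V) :
      x ∈ ((p h).map φ).support ↔ ∃ y ∈ (p h).support, φ y = x := by
    rw [Walk.support_map, List.mem_map]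
  refine ⟨⟨f.trans ⟨φ, hφ⟩, fun u v h => (p h).map φ, fun u v h => (hpath h).map hφ,
    fun u v h => ?_, fun u v h w hw => ?_, fun u v u' v' h h' hne x hx hx' => ?_⟩, ?_⟩
  · exact (congrArg _ (hsymm h)).trans (Walk.reverse_map φ (p h)).symm
  · obtain ⟨y, hy, hyw⟩ := (hmem h _).1 hw
    exact hbranch h w (hφ hyw ▸ hy)
  · obtain ⟨y, hy, rfl⟩ := (hmem h x).1 hx
    obtain ⟨y', hy', hyy'⟩ := (hmem h' _).1 hx'
    obtain rfl := hφ hyy'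
    obtain ⟨w, rfl⟩ := hdisj h h' hne y' hy hy'
    exact ⟨w, rfl⟩
  · refine Set.iUnion_subset fun e => ?_
    rintro x (⟨u, -, rfl⟩ | ⟨-, u, v, h, -, hx⟩)
    · exact ⟨f u, rfl⟩
    · obtain ⟨y, -, rfl⟩ := (hmem h x).1 hx
      exact ⟨y, rfl⟩

end TopologicalModels

section TriadAdditions

open Function

variable {U V : Type*} {H : SimpleGraph U} {G : SimpleGraph V} {C : Set V}

theorem IsCellModel.hasTriadMinor_of_isTheta (hG : KConnected G 3)
    {X : Sym2 U → Set V} (hX : IsCellModel H G X) {u v : U} {r : Bool → V} {E S : Bool → Set V}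
    (h : IsTheta G (outerCells X s(u, v)) r E S) (huv : u ≠ v) (hu : X s(u, u) = {r false})
    (hv : X s(v, v) = {r true}) (hM : (outerCells X s(u, v)).Nonempty) : HasTriadMinor H G := by
  have := hG.finite
  obtain ⟨E, S, h⟩ := h.exists_isExtremalTheta
  obtain ⟨j, hj⟩ := h.exists_touches_rest hG hM
  have hj' : j ≠ !j := by simp
  have hE : Disjoint (E false) (E true) := h.disjoint_ends (by decide)
  refine hX.hasTriadMinor_of_isEdgeSplit (A := E false ∪ S !j) (B := E true) (D := S j)
    { ne := huv
      left_subset := ?_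
      right_subset := ?_
      connected_left := (h.touches false !j).connected_union (h.connected_end _)
        (h.connected_strand _)
      connected_right := h.connected_end true
      disjoint := hE.union_left (h.disjoint_end_strand true _).symm
      disjoint_outer := ((h.disjoint_end _).union_left (h.disjoint_strand _)).union_left
        (h.disjoint_end _)
      touches := (h.touches true !j).symm.mono Set.subset_union_right subset_rfl }
    (h.connected_strand j) ?_ (h.disjoint_end_strand true j).symm (h.disjoint_strand j)
    ((h.touches false j).symm.mono subset_rfl Set.subset_union_left) (h.touches true j).symm hj
  · rw [hu]
    exact Set.singleton_subset_iff.2 (.inl (h.root_mem false))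
  · rw [hv]
    exact Set.singleton_subset_iff.2 (h.root_mem true)
  · exact (h.disjoint_end_strand false j).symm.union_right (h.disjoint_strands hj')

namespace TopologicalModel

variable (T : TopologicalModel H G) {u v : U} (h : H.Adj u v)

theorem hasTriadMinor_of_touches_getVert_of_touches_outerCells (hC : (G.induce C).Connected)
    (hCT : Disjoint C T.verts) {i j : ℕ} (hij : i < j) (hj : j ≤ (T.path h).length)
    (hCi : Touches G C {(T.path h).getVert i}) (hCj : Touches G C {(T.path h).getVert j})
    (hCo : Touches G C (outerCells T.cell s(u, v))) : HasTriadMinor H G := by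
  have hCs {k l : ℕ} : Disjoint C (walkSegment (T.path h) k l) :=
    hCT.mono_right (walkSegment_subset_support.trans (T.support_subset_verts h))
  exact T.isCellModel_cell.hasTriadMinor_of_isEdgeSplit
    (A := walkSegment (T.path h) 0 i) (B := walkSegment (T.path h) (i + 1) (T.path h).length)
    { ne := h.ne
      left_subset := by
        rw [T.cell_diag, Set.singleton_subset_iff]
        exact start_mem_walkSegment
      right_subset := by
        rw [T.cell_diag, Set.singleton_subset_iff]
        exact end_mem_walkSegment (by omega)
      connected_left := connected_walkSegment i.zero_le (by omega)
      connected_right := connected_walkSegment (by omega) le_rfl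
      disjoint := disjoint_walkSegment (T.isPath h) i.lt_succ_self le_rfl
      disjoint_outer := (T.disjoint_support_outerCells h).mono_left
        (Set.union_subset walkSegment_subset_support walkSegment_subset_support)
      touches := touches_walkSegment i.zero_le (by omega) le_rfl }
    hC hCs hCs (hCT.mono_right T.outerCells_subset_verts)
    (hCi.of_singleton (getVert_mem_walkSegment i.zero_le le_rfl))
    (hCj.of_singleton (getVert_mem_walkSegment hij hj)) hCo

theorem isTheta_walkSegment (hC : (G.induce C).Connected) (hCT : Disjoint C T.verts) {i j : ℕ}
    (hij : i + 1 < j) (hj : j ≤ (T.path h).length) (hCi : Touches G C {(T.path h).getVert i})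
    (hCj : Touches G C {(T.path h).getVert j}) :
    IsTheta G (outerCells T.cell s(u, v)) (fun b => cond b (T.branch v) (T.branch u))
      (fun b => cond b (walkSegment (T.path h) j (T.path h).length) (walkSegment (T.path h) 0 i))
      (fun b => cond b C (walkSegment (T.path h) (i + 1) (j - 1))) := by
  have hp := T.isPath h
  have hso {k l : ℕ} : Disjoint (walkSegment (T.path h) k l) (outerCells T.cell s(u, v)) :=
    (T.disjoint_support_outerCells h).mono_left walkSegment_subset_support
  have hCs {k l : ℕ} : Disjoint C (walkSegment (T.path h) k l) :=
    hCT.mono_right (walkSegment_subset_support.trans (T.support_subset_verts h))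
  have h_touches : Touches G (walkSegment (T.path h) (i + 1) (j - 1))
      (walkSegment (T.path h) (j - 1 + 1) (T.path h).length) :=
    touches_walkSegment (by omega) (by omega) le_rfl
  rw [Nat.sub_add_cancel (by omega)] at h_touches
  exact
  { root_mem := Bool.forall_bool.2 ⟨start_mem_walkSegment, end_mem_walkSegment hj⟩
    connected_end := Bool.forall_bool.2
      ⟨connected_walkSegment i.zero_le (by omega), connected_walkSegment hj le_rfl⟩
    connected_strand := Bool.forall_bool.2 ⟨connected_walkSegment (by omega) (by omega), hC⟩
    disjoint_ends := pairwise_disjoint_on_bool.2 (disjoint_walkSegment hp (by omega) le_rfl).symm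
    disjoint_strands := pairwise_disjoint_on_bool.2 hCs
    disjoint_end_strand := by
      simp only [Bool.forall_bool, cond_true, cond_false]
      exact ⟨⟨disjoint_walkSegment hp (by omega) (by omega), hCs.symm⟩,
        (disjoint_walkSegment hp (by omega) le_rfl).symm, hCs.symm⟩
    disjoint_end := Bool.forall_bool.2 ⟨hso, hso⟩
    disjoint_strand := Bool.forall_bool.2 ⟨hso, hCT.mono_right T.outerCells_subset_verts⟩
    touches := by
      simp only [Bool.forall_bool, cond_true, cond_false]
      exact ⟨⟨touches_walkSegment i.zero_le (by omega) (by omega),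
        (hCi.of_singleton (getVert_mem_walkSegment i.zero_le le_rfl)).symm⟩, h_touches.symm,
        (hCj.of_singleton (getVert_mem_walkSegment le_rfl hj)).symm⟩ }

theorem outerCells_nonempty (hU : 2 < ENat.card U) (u v : U) :
    (outerCells T.cell s(u, v)).Nonempty := by
  obtain ⟨w, hw⟩ : ∃ w, w ∉ ({u, v} : Set U) := by
    by_contra! h
    refine hU.not_ge ?_
    rw [← Set.encard_univ, ← Set.eq_univ_of_forall h]
    simpa [one_add_one_eq_two] using Set.encard_insert_le {v} u
  exact ⟨T.branch w, s(w, w), ⟨w, Sym2.mem_mk_left w w, by simpa using hw⟩, .inl ⟨w, rfl, rfl⟩⟩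

theorem hasTriadMinor_of_touches_support (hG : KConnected G 3) (hU : 2 < ENat.card U)
    (hC : (G.induce C).Connected) (hCT : Disjoint C T.verts) {x : Fin 3 → V} (hx : Injective x)
    (hxp : ∀ i, x i ∈ (T.path h).support) (hCx : ∀ i, Touches G C {x i}) : HasTriadMinor H G := by
  obtain ⟨i, j, hij, hj, hCi, hCj⟩ : ∃ i j, i + 1 < j ∧ j ≤ (T.path h).length ∧
      Touches G C {(T.path h).getVert i} ∧ Touches G C {(T.path h).getVert j} := by
    choose n hn hnl using fun i => Walk.mem_support_iff_exists_getVert.1 (hxp i)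
    have hn_inj : Injective n := fun a b hab => hx (by rw [← hn a, ← hn b, hab])
    obtain ⟨a, b, hab⟩ := exists_add_one_lt_of_injective hn_inj
    exact ⟨n a, n b, hab, hnl b, hn a ▸ hCx a, hn b ▸ hCx b⟩
  exact T.isCellModel_cell.hasTriadMinor_of_isTheta hG
    (T.isTheta_walkSegment h hC hCT hij hj hCi hCj) h.ne (T.cell_diag u) (T.cell_diag v)
    (T.outerCells_nonempty hU u v)

theorem hasTriadMinor_of_touches_cells (hG : KConnected G 3) (hU : 2 < ENat.card U)
    (hC : (G.induce C).Connected) (hCT : Disjoint C T.verts) {x : Fin 3 → V} (hx : Injective x)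
    (hCx : ∀ i, Touches G C {x i}) {e : Fin 3 → Sym2 U} (hxe : ∀ i, x i ∈ T.cell (e i))
    {i j : Fin 3} (hij : i ≠ j) (he : ∀ w ∈ e j, w ∈ e i) : HasTriadMinor H G := by
  obtain ⟨u, v, h, hei⟩ := T.exists_adj_of_mem_cell (hxe i) (hxe j) he (hx.ne hij)
  by_cases h_outer : ∃ k, ∃ w ∈ e k, w ∉ s(u, v)
  · obtain ⟨k, hk⟩ := h_outer
    have hCo := (hCx k).of_singleton (T := outerCells T.cell s(u, v)) ⟨e k, hk, hxe k⟩
    obtain ⟨a, ha, hal⟩ := Walk.mem_support_iff_exists_getVert.1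
      (T.mem_support_of_mem_cell h (fun _ => by rw [hei]; exact id) (hxe i))
    obtain ⟨b, hb, hbl⟩ := Walk.mem_support_iff_exists_getVert.1
      (T.mem_support_of_mem_cell h (hei ▸ he) (hxe j))
    have hCa := ha ▸ hCx i
    have hCb := hb ▸ hCx j
    obtain hab | rfl | hab := lt_trichotomy a b
    · exact T.hasTriadMinor_of_touches_getVert_of_touches_outerCells h hC hCT hab hbl hCa hCb hCo
    · exact absurd (hx (ha.symm.trans hb)) hij
    · exact T.hasTriadMinor_of_touches_getVert_of_touches_outerCells h hC hCT hab hal hCb hCa hCo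
  · push Not at h_outer
    exact T.hasTriadMinor_of_touches_support h hG hU hC hCT hx
      (fun k => T.mem_support_of_mem_cell h (h_outer k) (hxe k)) hCx

theorem exists_injective_touches (hG : KConnected G 3) (hU : 2 < ENat.card U)
    (hCne : C.Nonempty) (hCT : Disjoint C T.verts)
    (hCadj : ∀ a ∈ C, ∀ b, G.Adj a b → b ∈ C ∪ T.verts) :
    ∃ x : Fin 3 → V, Injective x ∧ ∀ i, x i ∈ T.verts ∧ Touches G C {x i} := by
  have := hG.finite
  set N : Set V := {x ∈ T.verts | Touches G C {x}}
  have hN : 2 < N.ncard := by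
    by_cases h : T.verts ⊆ N
    · have h_range : Set.range T.branch ⊆ N := by
        rintro _ ⟨u, rfl⟩
        exact h (Set.mem_iUnion.2 ⟨s(u, u), .inl ⟨u, rfl, rfl⟩⟩)
      have := Set.encard_le_encard h_range
      rw [← Set.image_univ, T.branch.injective.encard_image, Set.encard_univ,
        ← N.toFinite.cast_ncard_eq] at this
      exact_mod_cast hU.trans_le this
    · obtain ⟨y, hyT, hyN⟩ := Set.not_subset.1 h
      obtain ⟨c, hc⟩ := hCne
      refine hG.le_ncard_of_adj_subset hc (hCT.mono_right (Set.sep_subset _ _)) ?_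
        (fun hy => hy.elim (fun hyC => Set.disjoint_left.1 hCT hyC hyT) hyN)
      exact fun a ha b hab => (hCadj a ha b hab).imp_right fun hb => ⟨hb, a, ha, b, rfl, hab⟩
  obtain ⟨a, b, c, ha, hb, hc, hab, hac, hbc⟩ := (Set.two_lt_ncard_iff N.toFinite).1 hN
  exact ⟨![a, b, c], injective_vec3 hab hac hbc, by
    simpa only [Fin.forall_fin_succ] using ⟨ha, hb, hc, fun i => i.elim0⟩⟩

theorem hasTriadMinor (hG : KConnected G 3) (hU : 2 < ENat.card U) {z : V}
    (hz : z ∉ T.verts) : HasTriadMinor H G := by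
  have := hG.finite
  obtain ⟨C, hC, hCT, hCadj⟩ := exists_connected_disjoint (G := G) hz
  have hCne : C.Nonempty := Set.nonempty_coe_sort.1 hC.nonempty
  obtain ⟨x, hx, hCx⟩ := T.exists_injective_touches hG hU hCne hCT hCadj
  choose e hxe using fun i => Set.mem_iUnion.1 (hCx i).1
  by_cases h : ∃ i j, i ≠ j ∧ ∀ w ∈ e j, w ∈ e i
  · obtain ⟨i, j, hij, he⟩ := h
    exact T.hasTriadMinor_of_touches_cells hG hU hC hCT hx (fun i => (hCx i).2) hxe hij he
  · push Not at h
    -- Choosing `w i` in `e i` but outside `e (i + 1)` makes any two of the three choices differ.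
    choose w hwe hw using fun i => h (i + 1) i (by simp)
    have hw_ne (i : Fin 3) : w i ≠ w (i + 1) := fun h => hw i (h ▸ hwe (i + 1))
    have h_succ : ∀ i j : Fin 3, i ≠ j → j = i + 1 ∨ i = j + 1 := by decide
    have hw_inj : Injective w := fun i j hij => by
      by_contra hne
      obtain rfl | rfl := h_succ i j hne
      · exact hw_ne i hij
      · exact hw_ne j hij.symm
    have he_inj : Injective e := fun i j hij => by
      by_contra hne
      obtain ⟨a, ha, ha'⟩ := h i j hne
      exact ha' (hij ▸ ha)
    exact T.isCellModel_cell.hasTriadMinor_of_injective hC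
      (fun e => hCT.mono_right (Set.subset_iUnion T.cell e)) he_inj hw_inj hwe
      fun i => (hCx i).2.of_singleton (hxe i)

end TopologicalModel

end TriadAdditions

/-- If a 3-connected graph `G` has a proper subgraph which is a subdivision of a graph
`H` with at least 3 vertices, then `G` has a triad addition of `H` as a minor. -/
theorem stmt7 {U V : Type} [Fintype U] [Fintype V] (H : SimpleGraph U) (G : SimpleGraph V)
    (hU : 3 ≤ Fintype.card U) (h3 : KConnected G 3)
    (G' : G.Subgraph) (hsub : IsSubdivision G'.coe H)
    (hlt : G'.verts.ncard < Fintype.card V) :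
    ∃ x y z : U, x ≠ y ∧ y ≠ z ∧ x ≠ z ∧ IsMinor (triadAddition H x y z) G := by
  obtain ⟨T, hT⟩ := hsub.exists_topologicalModel G'.hom G'.hom_injective
  have h_ne : G'.verts ≠ Set.univ := by
    intro h
    simp [h] at hlt
  obtain ⟨z, hz⟩ := (Set.ne_univ_iff_exists_notMem _).1 h_ne
  have hzT : z ∉ T.verts := fun h => hz (by simpa using hT h)
  exact T.hasTriadMinor h3 (by simpa using Nat.lt_of_succ_le hU) hzT
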